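/- Let K : Ω × Ω → ℂ be a non-negative definite sesqui-analytic kernel on a domain Ω ⊆ ℂᵐ whose reproducing kernel Hilbert space contains the constant function 1, with c = ‖1‖². Then the matrix-valued kernel c·(K²∂ᵢ∂̄ⱼ log K)ᵢⱼ − (∂ᵢ∂̄ⱼK)ᵢⱼ is non-negative definite on Ω, i.e. (∂ᵢ∂̄ⱼK) ⪯ c·G_{K⁻¹}. -/

import Mathlib

open scoped ComplexOrder

local notation "conj'" => (starRingEnd ℂ)

variable {m : ℕ}

/-- A scalar kernel is non-negative definite on `s ⊆ ℂᵐ`. -/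
def IsNNDOn (s : Set (Fin m → ℂ)) (K : (Fin m → ℂ) → (Fin m → ℂ) → ℂ) : Prop :=
  ∀ (p : ℕ) (x : Fin p → (Fin m → ℂ)), (∀ i, x i ∈ s) →
    Matrix.PosSemidef (Matrix.of fun i j : Fin p => K (x i) (x j))

/-- An `M_m(ℂ)`-valued kernel is non-negative definite on `s ⊆ ℂᵐ`: every finite block
matrix `(K(xᵢ,xⱼ))` is positive semidefinite. -/
def IsNNDOnM (s : Set (Fin m → ℂ))
    (K : (Fin m → ℂ) → (Fin m → ℂ) → Matrix (Fin m) (Fin m) ℂ) : Prop :=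
  ∀ (p : ℕ) (x : Fin p → (Fin m → ℂ)), (∀ i, x i ∈ s) →
    Matrix.PosSemidef
      (Matrix.of fun i j : Fin p × Fin m => K (x i.1) (x j.1) i.2 j.2)

/-- `K` is sesqui-analytic on `s`: holomorphic in the first set of `m` variables and
anti-holomorphic in the second set. -/
def Sesq (s : Set (Fin m → ℂ)) (K : (Fin m → ℂ) → (Fin m → ℂ) → ℂ) : Prop :=
  (∀ w ∈ s, AnalyticOnNhd ℂ (fun z => K z w) s) ∧
    (∀ z ∈ s, AnalyticOnNhd ℂ (fun w => conj' (K z w)) s)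

/-- `∂ᵢ`, the partial derivative in the `i`-th holomorphic variable. -/
noncomputable def pD (i : Fin m) (K : (Fin m → ℂ) → (Fin m → ℂ) → ℂ)
    (z w : Fin m → ℂ) : ℂ :=
  deriv (fun t => K (Function.update z i t) w) (z i)

/-- `∂̄ⱼ`, the partial derivative in the conjugate of the `j`-th anti-holomorphic
variable. -/
noncomputable def pDb (j : Fin m) (K : (Fin m → ℂ) → (Fin m → ℂ) → ℂ)
    (z w : Fin m → ℂ) : ℂ :=
  conj' (deriv (fun t => conj' (K z (Function.update w j t))) (w j))

section HX

open Complex Metric MeasureTheory Real Filter Topology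

theorem hx_submean {b : ℂ → ℂ} {z : ℂ} {R : ℝ} (hR : 0 < R)
    (hb : AnalyticOnNhd ℂ b (closedBall z R)) :
    Real.posLog ‖b z‖ ≤ circleAverage (fun s => Real.posLog ‖b s‖) z R := by
  have habs : |R| = R := abs_of_pos hR
  have hci : CircleIntegrable (fun s => Real.posLog ‖b s‖) z R := by
    apply ContinuousOn.circleIntegrable hR.le
    exact Real.continuous_posLog.comp_continuousOn
      ((hb.continuousOn.mono sphere_subset_closedBall).norm)
  have hnn : 0 ≤ circleAverage (fun s => Real.posLog ‖b s‖) z R := by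
    apply circleAverage_nonneg_of_nonneg
    intro x _
    exact Real.posLog_nonneg
  by_cases h1 : ‖b z‖ ≤ 1
  · have : Real.posLog ‖b z‖ = 0 := by
      rw [Real.posLog_eq_zero_iff]; simpa using h1
    rw [this]; exact hnn
  · push Not at h1
    have h0 : b z ≠ 0 := by
      intro h; rw [h] at h1; simp at h1; linarith
    have hj := AnalyticOnNhd.circleAverage_log_norm hR.ne' (by rwa [habs]) h0
    have hs : 0 ≤ ∑ᶠ (u : ℂ), ((MeromorphicOn.divisor b (closedBall z |R|)) u : ℝ) *
        Real.log (R * ‖z - u‖⁻¹) := by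
      apply finsum_nonneg
      intro u
      by_cases hu : u ∈ closedBall z |R|
      · apply mul_nonneg
        · have := MeromorphicOn.AnalyticOnNhd.divisor_nonneg (f := b) (U := closedBall z |R|)
            (by rwa [habs])
          exact_mod_cast this u
        · by_cases hzu : ‖z - u‖ = 0
          · simp [hzu]
          · apply Real.log_nonneg
            rw [← div_eq_mul_inv, le_div_iff₀ (by positivity)]
            rw [mem_closedBall, dist_comm, dist_eq_norm, habs] at hu
            linarith
      · simp [hu]
    have hle : circleAverage (fun s => Real.log ‖b s‖) z R ≤
        circleAverage (fun s => Real.posLog ‖b s‖) z R := by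
      apply circleAverage_mono _ hci
      · intro x _
        simp only [Real.posLog]
        exact le_max_right _ _
      · apply MeromorphicOn.circleIntegrable_log_norm
        rw [habs]
        exact (hb.mono sphere_subset_closedBall).meromorphicOn
    have : Real.posLog ‖b z‖ = Real.log ‖b z‖ := Real.posLog_eq_log (by rw [abs_of_nonneg (norm_nonneg _)]; exact h1.le)
    linarith

theorem hx_area {φ : ℂ → ℝ} {z : ℂ} {ρ : ℝ} (hφ0 : ∀ s, 0 ≤ φ s)
    (hc : ContinuousOn φ (ball z ρ))
    (hm : ∀ r, 0 < r → r < ρ → φ z ≤ circleAverage φ z r) :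
    ENNReal.ofReal (φ z) * (∫⁻ r in Set.Ioo 0 ρ, ENNReal.ofReal (2 * π * r)) ≤
      ∫⁻ s in ball z ρ, ENNReal.ofReal (φ s) := by
  have hmap : ∀ p ∈ Set.Ioo 0 ρ ×ˢ Set.Ioo (-π) π, z + Complex.polarCoord.symm p ∈ ball z ρ := by
    intro p hp
    rw [mem_ball, dist_eq_norm, add_sub_cancel_left, Complex.norm_polarCoord_symm, abs_of_pos hp.1.1]
    exact hp.1.2
  have hcp : Continuous (fun p : ℝ × ℝ => z + Complex.polarCoord.symm p) := by
    simp only [Complex.polarCoord_symm_apply]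
    fun_prop
  calc _ = ∫⁻ r in Set.Ioo 0 ρ, ENNReal.ofReal r * ENNReal.ofReal (2 * π * φ z) := by
        rw [← lintegral_const_mul _ (by fun_prop)]
        apply setLIntegral_congr_fun measurableSet_Ioo
        intro r hr
        simp only
        rw [← ENNReal.ofReal_mul (hφ0 z), ← ENNReal.ofReal_mul hr.1.le]
        congr 1; ring
    _ ≤ ∫⁻ r in Set.Ioo 0 ρ, ∫⁻ θ in Set.Ioo (-π) π,
          ENNReal.ofReal r * ENNReal.ofReal (φ (z + Complex.polarCoord.symm (r, θ))) := by
        apply setLIntegral_mono' measurableSet_Ioo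
        intro r hr
        rw [lintegral_const_mul' _ _ ENNReal.ofReal_ne_top]
        gcongr
        have hcont : Continuous (fun θ : ℝ => φ (z + Complex.polarCoord.symm (r, θ))) := by
          have : Continuous (fun θ : ℝ => z + Complex.polarCoord.symm (r, θ)) :=
            hcp.comp (by fun_prop)
          apply hc.comp_continuous this
          intro θ
          rw [mem_ball, dist_eq_norm, add_sub_cancel_left, Complex.norm_polarCoord_symm, abs_of_pos hr.1]
          exact hr.2
        rw [← ofReal_integral_eq_lintegral_ofReal]
        · apply ENNReal.ofReal_le_ofReal
          have h1 := hm r hr.1 hr.2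
          rw [circleAverage_eq_integral_add (-π)] at h1
          rw [intervalIntegral.integral_comp_add_right (fun θ => φ (circleMap z r θ))] at h1
          rw [show (0 : ℝ) + -π = -π by ring, show 2 * π + -π = π by ring,
            intervalIntegral.integral_of_le (by linarith [Real.pi_pos]), integral_Ioc_eq_integral_Ioo,
            smul_eq_mul, inv_mul_eq_div, le_div_iff₀ (by positivity)] at h1
          have h2 : ∀ θ : ℝ, z + Complex.polarCoord.symm (r, θ) = circleMap z r θ := by
            intro θ
            simp [circleMap, Complex.exp_mul_I]
          simp only [h2]
          linarith
        · exact (hcont.integrableOn_Icc (a := -π) (b := π)).mono_set Set.Ioo_subset_Icc_self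
        · exact Eventually.of_forall fun _ => hφ0 _
    _ = ∫⁻ p in Set.Ioo 0 ρ ×ˢ Set.Ioo (-π) π,
          ENNReal.ofReal p.1 * ENNReal.ofReal (φ (z + Complex.polarCoord.symm p)) := by
        rw [Measure.volume_eq_prod, ← Measure.prod_restrict, lintegral_prod]
        rw [Measure.prod_restrict]
        apply ContinuousOn.aemeasurable _ (measurableSet_Ioo.prod measurableSet_Ioo)
        have h1 : ContinuousOn (fun p : ℝ × ℝ => φ (z + Complex.polarCoord.symm p))
            (Set.Ioo 0 ρ ×ˢ Set.Ioo (-π) π) := hc.comp hcp.continuousOn hmap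
        have h2 : ContinuousOn (fun p : ℝ × ℝ => ENNReal.ofReal (p.1 * φ (z + Complex.polarCoord.symm p)))
            (Set.Ioo 0 ρ ×ˢ Set.Ioo (-π) π) :=
          ENNReal.continuous_ofReal.comp_continuousOn (continuous_fst.continuousOn.mul h1)
        apply h2.congr
        intro p hp
        simp only
        rw [ENNReal.ofReal_mul hp.1.1.le]
    _ = ∫⁻ p in Set.Ioo 0 ρ ×ˢ Set.Ioo (-π) π, ENNReal.ofReal p.1 •
          ((ball z ρ).indicator (fun s => ENNReal.ofReal (φ s)) (z + Complex.polarCoord.symm p)) := by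
        apply setLIntegral_congr_fun (measurableSet_Ioo.prod measurableSet_Ioo)
        intro p hp
        simp only
        rw [Set.indicator_of_mem (hmap p hp), smul_eq_mul]
    _ ≤ ∫⁻ p in polarCoord.target, ENNReal.ofReal p.1 •
          ((ball z ρ).indicator (fun s => ENNReal.ofReal (φ s)) (z + Complex.polarCoord.symm p)) := by
        apply lintegral_mono_set
        intro p hp
        exact ⟨hp.1.1, hp.2⟩
    _ = ∫⁻ s in ball z ρ, ENNReal.ofReal (φ s) := by
        rw [Complex.lintegral_comp_polarCoord_symm
          (fun q => (ball z ρ).indicator (fun s => ENNReal.ofReal (φ s)) (z + q)),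
          lintegral_add_left_eq_self, lintegral_indicator measurableSet_ball]

theorem hx_seq {β : ℕ → ℂ → ℂ} (hβ : ∀ n, DifferentiableOn ℂ (β n) (ball 0 2))
    {M B : ℝ} (hM : 1 ≤ M) (hB : 1 ≤ B)
    (hub : ∀ n, ∀ s ∈ ball (0 : ℂ) 2, ‖β n s‖ ≤ M * B ^ n)
    (hpt : ∀ s ∈ ball (0 : ℂ) 2, ∃ C, ∀ n, ‖β n s‖ ≤ C) {η : ℝ} (hη : 0 < η) :
    ∃ N : ℕ, ∀ n ≥ N, ∀ s ∈ closedBall (0 : ℂ) (1 / 2), ‖β n s‖ ≤ Real.exp (η * n) := by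
  set ψ : ℕ → ℂ → ℝ := fun n s => Real.posLog ‖β n s‖ / n with hψ
  have hψ0 : ∀ n s, 0 ≤ ψ n s := fun n s => div_nonneg Real.posLog_nonneg (Nat.cast_nonneg _)
  have hψc : ∀ n, ContinuousOn (ψ n) (ball 0 2) := fun n =>
    (Real.continuous_posLog.comp_continuousOn (hβ n).continuousOn.norm).div_const _
  have hlM : 0 ≤ Real.log M := Real.log_nonneg hM
  have hlB : 0 ≤ Real.log B := Real.log_nonneg hB
  have hψb : ∀ n, ∀ s ∈ ball (0 : ℂ) 2, ψ n s ≤ Real.log M + Real.log B := by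
    intro n s hs
    rcases Nat.eq_zero_or_pos n with rfl | hn
    · simp only [hψ, Nat.cast_zero, div_zero]; positivity
    · have hn' : (1 : ℝ) ≤ n := by exact_mod_cast hn
      simp only [hψ]
      rw [div_le_iff₀ (by positivity)]
      have h1 : Real.posLog ‖β n s‖ ≤ Real.posLog (M * B ^ n) :=
        Real.posLog_le_posLog (norm_nonneg _) (hub n s hs)
      have h2 : 1 ≤ M * B ^ n := one_le_mul_of_one_le_of_one_le hM (one_le_pow₀ hB)
      rw [Real.posLog_eq_log (x := M * B ^ n) (by rw [abs_of_nonneg (by linarith)]; exact h2),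
        Real.log_mul (by positivity) (by positivity), Real.log_pow] at h1
      nlinarith
  have hψt : ∀ s ∈ ball (0 : ℂ) 2, Tendsto (fun n => ψ n s) atTop (𝓝 0) := by
    intro s hs
    obtain ⟨C, hC⟩ := hpt s hs
    apply squeeze_zero (hψ0 · s) (g := fun n : ℕ => Real.posLog C / n)
    · intro n
      simp only [hψ]
      gcongr
      exact hC n
    · exact tendsto_const_div_atTop_nhds_zero_nat _
  have hsub : ball (0 : ℂ) 1 ⊆ ball 0 2 := ball_subset_ball (by norm_num)
  have hI : Tendsto (fun n => ∫⁻ s in ball (0 : ℂ) 1, ENNReal.ofReal (ψ n s)) atTop (𝓝 0) := by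
    have := tendsto_lintegral_of_dominated_convergence' (μ := volume.restrict (ball (0 : ℂ) 1))
      (F := fun n s => ENNReal.ofReal (ψ n s)) (f := fun _ => 0)
      (fun _ => ENNReal.ofReal (Real.log M + Real.log B)) ?_ ?_ ?_ ?_
    · simpa using this
    · intro n
      exact ENNReal.measurable_ofReal.comp_aemeasurable
        (((hψc n).mono hsub).aemeasurable measurableSet_ball)
    · intro n
      filter_upwards [ae_restrict_mem measurableSet_ball] with s hs
      exact ENNReal.ofReal_le_ofReal (hψb n s (hsub hs))
    · rw [lintegral_const]
      apply ENNReal.mul_ne_top ENNReal.ofReal_ne_top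
      rw [Measure.restrict_apply_univ]
      exact measure_ball_lt_top.ne
    · filter_upwards [ae_restrict_mem measurableSet_ball] with s hs
      have := ENNReal.tendsto_ofReal (hψt s (hsub hs))
      simpa using this
  set c : ENNReal := ∫⁻ r in Set.Ioo (0 : ℝ) (1 / 2), ENNReal.ofReal (2 * π * r) with hc
  have hc0 : c ≠ 0 := by
    rw [hc]
    apply ne_of_gt
    rw [setLIntegral_pos_iff (by fun_prop)]
    have : Set.Ioo (0 : ℝ) (1 / 2) ⊆ Function.support (fun r => ENNReal.ofReal (2 * π * r)) ∩ Set.Ioo 0 (1 / 2) := by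
      intro r hr
      refine ⟨?_, hr⟩
      have : 0 < 2 * π * r := by have := hr.1; positivity
      simpa using this
    refine lt_of_lt_of_le ?_ (measure_mono this)
    simp
  have hev : ∀ᶠ n in atTop, ∫⁻ s in ball (0 : ℂ) 1, ENNReal.ofReal (ψ n s) < ENNReal.ofReal η * c := by
    apply hI.eventually_lt_const
    apply ENNReal.mul_pos _ hc0
    simpa using hη
  obtain ⟨N, hN⟩ := eventually_atTop.mp (hev.and (eventually_ge_atTop 1))
  refine ⟨N, fun n hn s hs => ?_⟩
  obtain ⟨hlt, hn1⟩ := hN n hn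
  have hn' : (1 : ℝ) ≤ n := by exact_mod_cast hn1
  rw [mem_closedBall, dist_zero_right] at hs
  have hss : ball s (1 / 2) ⊆ ball (0 : ℂ) 1 := by
    apply ball_subset_ball'
    rw [dist_zero_right]; linarith
  have harea := hx_area (φ := ψ n) (z := s) (ρ := 1 / 2) (hψ0 n) ((hψc n).mono (hss.trans hsub)) (by
    intro r hr0 hr
    have han : AnalyticOnNhd ℂ (β n) (closedBall s r) := by
      apply ((hβ n).analyticOnNhd isOpen_ball).mono
      apply closedBall_subset_ball'
      rw [dist_zero_right]; linarith
    have := hx_submean hr0 han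
    have h2 : ψ n = fun s => (n : ℝ)⁻¹ • Real.posLog ‖β n s‖ := by
      funext s; simp only [hψ, smul_eq_mul]; rw [div_eq_inv_mul]
    rw [h2, circleAverage_fun_smul]
    simp only [smul_eq_mul]
    gcongr)
  have h3 : ENNReal.ofReal (ψ n s) * c < ENNReal.ofReal η * c :=
    lt_of_le_of_lt (harea.trans (lintegral_mono_set hss)) hlt
  have h4 : ENNReal.ofReal (ψ n s) < ENNReal.ofReal η := lt_of_mul_lt_mul_right' h3
  have h5 : ψ n s < η := (ENNReal.ofReal_lt_ofReal_iff hη).mp h4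
  simp only [hψ] at h5
  rw [div_lt_iff₀ (by positivity)] at h5
  have h6 : Real.log ‖β n s‖ ≤ η * n := (le_max_right 0 _).trans h5.le
  exact (Real.le_exp_log _).trans (Real.exp_le_exp.mpr h6)

theorem hx_dslope_bound {g : ℂ → ℂ} {t₀ : ℂ} {ε R M : ℝ} (hε : 0 < ε) (hR : ε < R)
    (hg : DifferentiableOn ℂ g (ball t₀ R)) (hM : ∀ t ∈ closedBall t₀ ε, ‖g t‖ ≤ M) :
    ∀ t ∈ closedBall t₀ ε, ‖dslope g t₀ t‖ ≤ 2 / ε * M := by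
  intro t ht
  have hd : DifferentiableOn ℂ (dslope g t₀) (ball t₀ R) :=
    (Complex.differentiableOn_dslope (ball_mem_nhds _ (hε.trans hR))).mpr hg
  have hcl : closure (ball t₀ ε) = closedBall t₀ ε := closure_ball _ hε.ne'
  apply Complex.norm_le_of_forall_mem_frontier_norm_le (U := ball t₀ ε) isBounded_ball
  · apply DifferentiableOn.diffContOnCl
    rw [hcl]
    exact hd.mono (closedBall_subset_ball hR)
  · intro z hz
    rw [frontier_ball _ hε.ne', mem_sphere_iff_norm] at hz
    have hne : z ≠ t₀ := by
      rintro rfl; simp at hz; exact hε.ne hz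
    rw [dslope_of_ne _ hne, slope_def_module, norm_smul, norm_inv, hz]
    have h1 := hM z (by rw [mem_closedBall, dist_eq_norm, hz])
    have h2 := hM t₀ (mem_closedBall_self hε.le)
    have h3 := norm_sub_le (g z) (g t₀)
    rw [div_mul_eq_mul_div, inv_mul_eq_div]
    gcongr
    linarith
  · rw [hcl]; exact ht

/-- separately analytic on an open set times a disc, bounded: dslope in the second variable
is again such. -/
theorem hx_dslope_sep {f : ℂ → ℂ → ℂ} {U : Set ℂ} (hU : IsOpen U) {t₀ : ℂ} {ε R M : ℝ}
    (hε : 0 < ε) (hR : ε < R)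
    (h1 : ∀ t ∈ closedBall t₀ ε, DifferentiableOn ℂ (fun s => f s t) U)
    (h2 : ∀ s ∈ U, DifferentiableOn ℂ (f s) (ball t₀ R))
    (hM : ∀ s ∈ U, ∀ t ∈ closedBall t₀ ε, ‖f s t‖ ≤ M) :
    (∀ t ∈ closedBall t₀ ε, DifferentiableOn ℂ (fun s => dslope (f s) t₀ t) U) ∧
    (∀ s ∈ U, DifferentiableOn ℂ (dslope (f s) t₀) (ball t₀ R)) ∧
    (∀ s ∈ U, ∀ t ∈ closedBall t₀ ε, ‖dslope (f s) t₀ t‖ ≤ 2 / ε * M) := by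
  have hd : ∀ s ∈ U, DifferentiableOn ℂ (dslope (f s) t₀) (ball t₀ R) := fun s hs =>
    (Complex.differentiableOn_dslope (ball_mem_nhds _ (hε.trans hR))).mpr (h2 s hs)
  have hb : ∀ s ∈ U, ∀ t ∈ closedBall t₀ ε, ‖dslope (f s) t₀ t‖ ≤ 2 / ε * M := fun s hs =>
    hx_dslope_bound hε hR (h2 s hs) (hM s hs)
  have hbb : ∀ s ∈ U, ∀ t ∈ closedBall t₀ ε, ‖dslope (dslope (f s) t₀) t₀ t‖ ≤ 2 / ε * (2 / ε * M) :=
    fun s hs => hx_dslope_bound hε hR (hd s hs) (hb s hs)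
  have hne : ∀ t ∈ closedBall t₀ ε, t ≠ t₀ → DifferentiableOn ℂ (fun s => dslope (f s) t₀ t) U := by
    intro t ht hne
    have : (fun s => dslope (f s) t₀ t) = fun s => (t - t₀)⁻¹ • (f s t - f s t₀) := by
      funext s; rw [dslope_of_ne _ hne, slope_def_module]
    rw [this]
    exact ((h1 t ht).sub (h1 t₀ (mem_closedBall_self hε.le))).const_smul (t - t₀)⁻¹
  refine ⟨fun t ht => ?_, hd, hb⟩
  by_cases htt : t = t₀
  · subst htt
    apply TendstoLocallyUniformlyOn.differentiableOn (φ := 𝓝[≠] t)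
      (F := fun t' s => dslope (f s) t t') _ _ hU
    · apply TendstoUniformlyOn.tendstoLocallyUniformlyOn
      rw [Metric.tendstoUniformlyOn_iff]
      intro δ hδ
      have hlim : Tendsto (fun t' : ℂ => ‖t' - t‖ * (2 / ε * (2 / ε * M))) (𝓝[≠] t) (𝓝 0) := by
        have : Continuous (fun t' : ℂ => ‖t' - t‖ * (2 / ε * (2 / ε * M))) := by fun_prop
        have := (this.tendsto t).mono_left (nhdsWithin_le_nhds (s := {t}ᶜ))
        simpa using this
      filter_upwards [hlim.eventually_lt_const hδ,
        nhdsWithin_le_nhds (closedBall_mem_nhds t hε)] with t' ht' htc s hs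
      rw [dist_comm, dist_eq_norm]
      have h := sub_smul_dslope (dslope (f s) t) t t'
      rw [← h, norm_smul]
      refine lt_of_le_of_lt ?_ ht'
      gcongr
      exact hbb s hs t' htc
    · filter_upwards [nhdsWithin_le_nhds (closedBall_mem_nhds t hε), self_mem_nhdsWithin] with t' h h'
      exact hne t' h h'
  · exact hne t ht htt

theorem hx_baire {f : ℂ → ℂ → ℂ}
    (h1 : ∀ t ∈ ball (0 : ℂ) 4, DifferentiableOn ℂ (fun s => f s t) (ball 0 4))
    (h2 : ∀ s ∈ ball (0 : ℂ) 4, DifferentiableOn ℂ (f s) (ball 0 4)) :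
    ∃ (t₀ : ℂ) (ε M : ℝ), ‖t₀‖ < 1 / 4 ∧ 0 < ε ∧ ε ≤ 1 ∧ 1 ≤ M ∧
      ∀ s ∈ ball (0 : ℂ) 2, ∀ t ∈ closedBall t₀ ε, ‖f s t‖ ≤ M := by
  set E : ℕ → Set ℂ := fun M => {t | t ∈ closedBall (0 : ℂ) 1 ∧ ∀ s ∈ closedBall (0 : ℂ) 2, ‖f s t‖ ≤ M} with hE
  have hEc : ∀ M, IsClosed (E M) := by
    intro M
    have : E M = closedBall (0 : ℂ) 1 ∩ ⋂ s ∈ closedBall (0 : ℂ) 2, (closedBall (0 : ℂ) 1 ∩ {t | ‖f s t‖ ≤ M}) := by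
      ext t
      simp only [hE, Set.mem_ofPred_eq, Set.mem_inter_iff, Set.mem_iInter]
      constructor
      · rintro ⟨ha, hb⟩; exact ⟨ha, fun s hs => ⟨ha, hb s hs⟩⟩
      · rintro ⟨ha, hb⟩; exact ⟨ha, fun s hs => (hb s hs).2⟩
    rw [this]
    refine isClosed_closedBall.inter (isClosed_biInter fun s hs => ?_)
    have hcont : ContinuousOn (fun t => ‖f s t‖) (closedBall 0 1) :=
      ((h2 s (closedBall_subset_ball (by norm_num) hs)).continuousOn.mono
        (closedBall_subset_ball (by norm_num))).norm
    exact hcont.preimage_isClosed_of_isClosed isClosed_closedBall isClosed_Iic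
  have hcover : ⋃ M, (E M ∪ (ball (0 : ℂ) 1)ᶜ) = Set.univ := by
    rw [Set.eq_univ_iff_forall]
    intro t
    rw [Set.mem_iUnion]
    by_cases ht : t ∈ ball (0 : ℂ) 1
    · have hcont : ContinuousOn (fun s => f s t) (closedBall 0 2) :=
        (h1 t (ball_subset_ball (by norm_num) ht)).continuousOn.mono
          (closedBall_subset_ball (by norm_num))
      obtain ⟨C, hC⟩ := (isCompact_closedBall (0 : ℂ) 2).exists_bound_of_continuousOn hcont
      obtain ⟨n, hn⟩ := exists_nat_ge C
      exact ⟨n, Or.inl ⟨ball_subset_closedBall ht, fun s hs => (hC s hs).trans hn⟩⟩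
    · exact ⟨0, Or.inr ht⟩
  have hd := dense_iUnion_interior_of_closed
    (fun M => (hEc M).union isOpen_ball.isClosed_compl) hcover
  obtain ⟨t₀, ht₀, ht₀'⟩ := hd.inter_open_nonempty (ball (0 : ℂ) (1 / 4)) isOpen_ball
    (nonempty_ball.mpr (by norm_num))
  rw [Set.mem_iUnion] at ht₀'
  obtain ⟨M, hM⟩ := ht₀'
  have hnh : interior (E M ∪ (ball (0 : ℂ) 1)ᶜ) ∩ ball 0 1 ∈ 𝓝 t₀ :=
    inter_mem (isOpen_interior.mem_nhds hM)
      (isOpen_ball.mem_nhds (ball_subset_ball (by norm_num) ht₀))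
  obtain ⟨ε, hε, hεs⟩ := Metric.nhds_basis_closedBall.mem_iff.mp hnh
  refine ⟨t₀, min ε 1, max M 1, by simpa using ht₀, by positivity, min_le_right _ _, le_max_right _ _, ?_⟩
  intro s hs t ht
  have ht' := hεs (closedBall_subset_closedBall (min_le_left _ _) ht)
  rcases interior_subset ht'.1 with h | h
  · exact (h.2 s (ball_subset_closedBall hs)).trans (le_max_left _ _)
  · exact absurd ht'.2 h

theorem hx_hartogs4 {f : ℂ → ℂ → ℂ}
    (h1 : ∀ t ∈ ball (0 : ℂ) 4, DifferentiableOn ℂ (fun s => f s t) (ball 0 4))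
    (h2 : ∀ s ∈ ball (0 : ℂ) 4, DifferentiableOn ℂ (f s) (ball 0 4)) :
    ∃ M : ℝ, ∀ s ∈ closedBall (0 : ℂ) (1 / 4), ∀ t ∈ closedBall (0 : ℂ) (1 / 4), ‖f s t‖ ≤ M := by
  obtain ⟨t₀, ε, M, ht₀, hε, hε1, hM, hb⟩ := hx_baire h1 h2
  set g : ℕ → ℂ → ℂ → ℂ := fun n s => (fun h => dslope h t₀)^[n] (f s) with hg
  have hg0 : ∀ s, g 0 s = f s := fun s => rfl
  have hgs : ∀ n s, g (n + 1) s = dslope (g n s) t₀ := fun n s => by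
    simp only [hg, Function.iterate_succ_apply']
  have hball3 : ball t₀ 3 ⊆ ball 0 4 := by
    apply ball_subset_ball'; rw [dist_zero_right]; linarith
  have hB : 1 ≤ 2 / ε := by rw [le_div_iff₀ hε]; linarith
  have hind : ∀ n, (∀ t ∈ closedBall t₀ ε, DifferentiableOn ℂ (fun s => g n s t) (ball 0 2)) ∧
      (∀ s ∈ ball (0 : ℂ) 2, DifferentiableOn ℂ (g n s) (ball t₀ 3)) ∧
      (∀ s ∈ ball (0 : ℂ) 2, ∀ t ∈ closedBall t₀ ε, ‖g n s t‖ ≤ M * (2 / ε) ^ n) := by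
    intro n
    induction n with
    | zero =>
      refine ⟨fun t ht => ?_, fun s hs => ?_, fun s hs t ht => ?_⟩
      · exact (h1 t (hball3 (closedBall_subset_ball (by linarith) ht))).mono
          (ball_subset_ball (by norm_num))
      · exact (h2 s (ball_subset_ball (by norm_num) hs)).mono hball3
      · simpa [hg0] using hb s hs t ht
    | succ n ih =>
      obtain ⟨i1, i2, i3⟩ := ih
      have := hx_dslope_sep isOpen_ball hε (by linarith : ε < 3) i1 i2 i3
      simp only [hgs]
      refine ⟨this.1, this.2.1, fun s hs t ht => (this.2.2 s hs t ht).trans (le_of_eq ?_)⟩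
      rw [pow_succ]; ring
  have hfix : ∀ s ∈ ball (0 : ℂ) 2, ∃ C, ∀ n, ∀ t ∈ closedBall t₀ 2, ‖g n s t‖ ≤ C := by
    intro s hs
    have hcont : ContinuousOn (f s) (closedBall t₀ 2) :=
      ((hind 0).2.1 s hs).continuousOn.mono (closedBall_subset_ball (by norm_num))
    obtain ⟨C, hC⟩ := (isCompact_closedBall t₀ 2).exists_bound_of_continuousOn hcont
    refine ⟨C, fun n => ?_⟩
    induction n with
    | zero => exact hC
    | succ n ih =>
      have := hx_dslope_bound (by norm_num : (0 : ℝ) < 2) (by norm_num : (2 : ℝ) < 3)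
        ((hind n).2.1 s hs) ih
      rw [hgs]
      simpa using this
  obtain ⟨N, hN⟩ := hx_seq (β := fun n s => g n s t₀)
    (fun n => (hind n).1 t₀ (mem_closedBall_self hε.le)) hM hB
    (fun n s hs => (hind n).2.2 s hs t₀ (mem_closedBall_self hε.le))
    (fun s hs => by
      obtain ⟨C, hC⟩ := hfix s hs
      exact ⟨C, fun n => hC n t₀ (mem_closedBall_self (by norm_num))⟩)
    (η := Real.log (3 / 2)) (Real.log_pos (by norm_num))
  have hexp : ∀ (s t : ℂ) (n : ℕ), f s t =
      ∑ k ∈ Finset.range n, (t - t₀) ^ k * g k s t₀ + (t - t₀) ^ n * g n s t := by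
    intro s t n
    induction n with
    | zero => simp [hg0]
    | succ n ih =>
      have h := sub_smul_dslope (g n s) t₀ t
      rw [smul_eq_mul] at h
      rw [Finset.sum_range_succ, hgs, ih]
      rw [pow_succ, mul_assoc, h]; ring
  set Q : ℝ := M * (2 / ε) ^ N with hQ
  have hQ1 : 1 ≤ Q := one_le_mul_of_one_le_of_one_le hM (one_le_pow₀ hB)
  have hco : ∀ k, ∀ s ∈ closedBall (0 : ℂ) (1 / 2), ‖g k s t₀‖ ≤ Q * (3 / 2) ^ k := by
    intro k s hs
    have hone : (1 : ℝ) ≤ (3 / 2) ^ k := one_le_pow₀ (by norm_num)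
    rcases lt_or_ge k N with hk | hk
    · have a1 := (hind k).2.2 s (closedBall_subset_ball (by norm_num) hs) t₀ (mem_closedBall_self hε.le)
      have a2 : M * (2 / ε) ^ k ≤ Q := by
        rw [hQ]; gcongr
      nlinarith
    · have a1 := hN k hk s hs
      rw [mul_comm, Real.exp_nat_mul, Real.exp_log (by norm_num)] at a1
      nlinarith
  refine ⟨Q * 4, fun s hs t ht => ?_⟩
  have hs' : s ∈ closedBall (0 : ℂ) (1 / 2) := closedBall_subset_closedBall (by norm_num) hs
  obtain ⟨C, hC⟩ := hfix s (closedBall_subset_ball (by norm_num) hs')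
  have htt : ‖t - t₀‖ ≤ 1 / 2 := by
    rw [mem_closedBall, dist_zero_right] at ht
    have := norm_sub_le t t₀; linarith
  have hfin : ∀ n : ℕ, ‖f s t‖ ≤ Q * 4 + (1 / 2) ^ n * C := by
    intro n
    rw [hexp s t n]
    refine (norm_add_le _ _).trans (add_le_add ?_ ?_)
    · calc _ ≤ ∑ k ∈ Finset.range n, Q * (3 / 4 : ℝ) ^ k := by
            refine norm_sum_le_of_le _ fun k _ => ?_
            rw [norm_mul, norm_pow]
            calc _ ≤ (1 / 2 : ℝ) ^ k * (Q * (3 / 2) ^ k) := by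
                  gcongr; exact hco k s hs'
              _ = Q * (3 / 4) ^ k := by
                  rw [show (3 / 4 : ℝ) = 1 / 2 * (3 / 2) by norm_num, mul_pow]; ring
        _ ≤ Q * 4 := by
            rw [← Finset.mul_sum]
            gcongr
            have := Summable.sum_le_tsum (Finset.range n) (fun k _ => by positivity)
              (summable_geometric_of_lt_one (by norm_num : (0 : ℝ) ≤ 3 / 4) (by norm_num))
            rw [tsum_geometric_of_lt_one (by norm_num) (by norm_num)] at this
            linarith
    · rw [norm_mul, norm_pow]
      gcongr
      exact hC n t (by rw [mem_closedBall, dist_eq_norm]; linarith)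
  have hlim : Tendsto (fun n : ℕ => Q * 4 + (1 / 2 : ℝ) ^ n * C) atTop (𝓝 (Q * 4 + 0 * C)) :=
    ((tendsto_pow_atTop_nhds_zero_of_lt_one (by norm_num) (by norm_num)).mul_const C).const_add _
  have := ge_of_tendsto' hlim hfin
  simpa using this

theorem hx_double_limit {f : ℂ → ℂ → ℂ} {R : ℝ} (hR : 0 < R)
    (h1 : ∀ t ∈ ball (0 : ℂ) R, DifferentiableOn ℂ (fun s => f s t) (ball 0 R))
    (h2 : ∀ s ∈ ball (0 : ℂ) R, DifferentiableOn ℂ (f s) (ball 0 R)) :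
    Tendsto (fun h : ℂ => h⁻¹ * (h⁻¹ * (f h h - f h 0) - h⁻¹ * (f 0 h - f 0 0))) (𝓝[≠] 0)
      (𝓝 (deriv (fun s => deriv (f s) 0) 0)) := by
  have hmem : ∀ {r : ℝ} {s : ℂ}, s ∈ ball (0 : ℂ) r → (R / 4 : ℝ) * s ∈ ball (0 : ℂ) (R / 4 * r) := by
    intro r s hs
    rw [mem_ball, dist_zero_right] at hs ⊢
    rw [norm_mul, Complex.norm_real, Real.norm_of_nonneg (by positivity)]
    gcongr
  have hmap : Set.MapsTo (fun s : ℂ => (R / 4 : ℝ) * s) (ball 0 4) (ball 0 R) := by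
    intro s hs
    have := hmem hs
    rwa [div_mul_cancel₀ _ (by norm_num : (4 : ℝ) ≠ 0)] at this
  have hdm : DifferentiableOn ℂ (fun s : ℂ => (R / 4 : ℝ) * s) (ball 0 4) := by fun_prop
  obtain ⟨M, hM⟩ := hx_hartogs4 (f := fun s t => f ((R / 4 : ℝ) * s) ((R / 4 : ℝ) * t))
    (fun t ht => (h1 _ (hmap ht)).comp hdm hmap) (fun s hs => (h2 _ (hmap hs)).comp hdm hmap)
  set r : ℝ := R / 16 with hr
  have hr0 : 0 < r := by positivity
  have hrR : r < R := by rw [hr]; linarith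
  have hMb : ∀ s ∈ closedBall (0 : ℂ) r, ∀ t ∈ closedBall (0 : ℂ) r, ‖f s t‖ ≤ M := by
    have hdiv : ∀ s ∈ closedBall (0 : ℂ) r, ((R / 4 : ℝ) : ℂ)⁻¹ * s ∈ closedBall (0 : ℂ) (1 / 4) := by
      intro s hs
      rw [mem_closedBall, dist_zero_right] at hs ⊢
      rw [norm_mul, norm_inv, Complex.norm_real, Real.norm_of_nonneg (by positivity),
        inv_mul_eq_div, div_le_iff₀ (by positivity)]
      rw [hr] at hs; linarith
    intro s hs t ht
    have := hM _ (hdiv s hs) _ (hdiv t ht)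
    have hne : ((R / 4 : ℝ) : ℂ) ≠ 0 := by
      rw [Ne, Complex.ofReal_eq_zero]; positivity
    simpa only [mul_inv_cancel_left₀ hne] using this
  have hsub : closedBall (0 : ℂ) r ⊆ ball 0 R := closedBall_subset_ball hrR
  obtain ⟨a1, a2, a3⟩ := hx_dslope_sep (f := f) (isOpen_ball : IsOpen (ball (0 : ℂ) r)) hr0 hrR
    (fun t ht => (h1 t (hsub ht)).mono (ball_subset_ball hrR.le))
    (fun s hs => h2 s (hsub (ball_subset_closedBall hs)))
    (fun s hs t ht => hMb s (ball_subset_closedBall hs) t ht)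
  set q : ℝ := r / 2 with hq
  have hq0 : 0 < q := by positivity
  have hqr : q < r := by rw [hq]; linarith
  have hq2 : closedBall (0 : ℂ) q ⊆ ball 0 r := closedBall_subset_ball hqr
  obtain ⟨b1, b2, b3⟩ := hx_dslope_sep (f := fun t s => dslope (f s) 0 t)
    (isOpen_ball : IsOpen (ball (0 : ℂ) q)) hq0 hqr
    (fun s hs => (a2 s (hq2 hs)).mono (ball_subset_ball (hqr.le.trans hrR.le)))
    (fun t ht => a1 t (ball_subset_closedBall (ball_subset_ball hqr.le ht)))
    (fun t ht s hs => a3 s (hq2 hs) t (ball_subset_closedBall (ball_subset_ball hqr.le ht)))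
  set G : ℂ → ℂ → ℂ := fun t s => dslope (fun s => dslope (f s) 0 t) 0 s with hG
  have hG0 : deriv (fun s => deriv (f s) 0) 0 = G 0 0 := by
    simp only [hG, dslope_same]
  have hcont0 : ContinuousAt (fun t => G t 0) 0 :=
    ((b1 0 (mem_closedBall_self hq0.le)).differentiableAt (ball_mem_nhds _ hq0)).continuousAt
  rw [hG0]
  have hT1 : Tendsto (fun h : ℂ => G h 0) (𝓝[≠] 0) (𝓝 (G 0 0)) :=
    hcont0.tendsto.mono_left nhdsWithin_le_nhds
  have hbound : ∀ t ∈ ball (0 : ℂ) q, ∀ s ∈ closedBall (0 : ℂ) q,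
      ‖dslope (G t) 0 s‖ ≤ 2 / q * (2 / q * (2 / r * M)) := fun t ht =>
    hx_dslope_bound hq0 hqr (b2 t ht) (b3 t ht)
  have hT2 : Tendsto (fun h : ℂ => h * dslope (G h) 0 h) (𝓝[≠] 0) (𝓝 0) := by
    apply squeeze_zero_norm' (a := fun h : ℂ => ‖h‖ * (2 / q * (2 / q * (2 / r * M))))
    · filter_upwards [nhdsWithin_le_nhds (ball_mem_nhds (0 : ℂ) hq0)] with h hh
      rw [norm_mul]
      gcongr
      exact hbound h hh h (ball_subset_closedBall hh)
    · have : Continuous (fun h : ℂ => ‖h‖ * (2 / q * (2 / q * (2 / r * M)))) := by fun_prop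
      have := (this.tendsto 0).mono_left (nhdsWithin_le_nhds (s := {0}ᶜ))
      simpa using this
  have hT := hT1.add hT2
  rw [add_zero] at hT
  refine hT.congr' ?_
  filter_upwards [self_mem_nhdsWithin] with h hh
  have hne : h ≠ 0 := hh
  have e := sub_smul_dslope (G h) 0 h
  rw [sub_zero, smul_eq_mul] at e
  rw [e, add_sub_cancel]
  simp only [hG, dslope_of_ne _ hne, slope_def_module, sub_zero, smul_eq_mul]

theorem hx_det {ι : Type*} [Fintype ι] [DecidableEq ι] {S : Matrix (ι ⊕ ι) (ι ⊕ ι) ℂ}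
    (hS : S.PosSemidef) :
    (Matrix.of fun a b : ι => S (Sum.inl a) (Sum.inl b) * S (Sum.inr a) (Sum.inr b) -
      S (Sum.inl a) (Sum.inr b) * S (Sum.inr a) (Sum.inl b)).PosSemidef := by
  obtain ⟨B, hB⟩ : ∃ B : Matrix (ι ⊕ ι) (ι ⊕ ι) ℂ, S = B.conjTranspose * B := by
    open scoped MatrixOrder Matrix.Norms.L2Operator in
    exact CStarAlgebra.nonneg_iff_eq_star_mul_self.mp hS.nonneg
  set C : Matrix ((ι ⊕ ι) × (ι ⊕ ι)) ι ℂ := Matrix.of fun k a =>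
    B k.1 (Sum.inl a) * B k.2 (Sum.inr a) - B k.2 (Sum.inl a) * B k.1 (Sum.inr a) with hC
  have hent : ∀ x y, S x y = ∑ k, star (B k x) * B k y := by
    intro x y
    rw [hB, Matrix.mul_apply]
    rfl
  have hkey : (Matrix.of fun a b : ι => S (Sum.inl a) (Sum.inl b) * S (Sum.inr a) (Sum.inr b) -
      S (Sum.inl a) (Sum.inr b) * S (Sum.inr a) (Sum.inl b)) = (1 / 2 : ℝ) • (C.conjTranspose * C) := by
    ext a b
    rw [Matrix.smul_apply, Matrix.mul_apply, Fintype.sum_prod_type]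
    simp only [Matrix.of_apply, Matrix.conjTranspose_apply, hC, hent, star_sub, star_mul']
    have e : ∀ u u' v v' : ι ⊕ ι → ℂ, (∑ k, ∑ l, (u k * u' l - u l * u' k) * (v k * v' l - v l * v' k)) =
        2 * ((∑ k, u k * v k) * (∑ k, u' k * v' k) - (∑ k, u k * v' k) * (∑ k, u' k * v k)) := by
      intro u u' v v'
      have e1 : (∑ k, u k * v k) * (∑ k, u' k * v' k) = ∑ k, ∑ l, u k * v k * (u' l * v' l) :=
        Finset.sum_mul_sum ..
      have e2 : (∑ k, u k * v k) * (∑ k, u' k * v' k) = ∑ k, ∑ l, u' k * v' k * (u l * v l) := by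
        rw [mul_comm]; exact Finset.sum_mul_sum ..
      have e3 : (∑ k, u k * v' k) * (∑ k, u' k * v k) = ∑ k, ∑ l, u k * v' k * (u' l * v l) :=
        Finset.sum_mul_sum ..
      have e4 : (∑ k, u k * v' k) * (∑ k, u' k * v k) = ∑ k, ∑ l, u' k * v k * (u l * v' l) := by
        rw [mul_comm]; exact Finset.sum_mul_sum ..
      rw [two_mul]
      nth_rewrite 1 [e1, e3]
      rw [e2, e4]
      simp only [← Finset.sum_sub_distrib, ← Finset.sum_add_distrib]
      refine Finset.sum_congr rfl fun k _ => Finset.sum_congr rfl fun l _ => ?_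
      ring
    rw [e (fun k => star (B k (Sum.inl a))) (fun k => star (B k (Sum.inr a)))
      (fun k => B k (Sum.inl b)) (fun k => B k (Sum.inr b))]
    rw [Complex.real_smul]
    push_cast
    ring
  rw [hkey]
  exact (Matrix.posSemidef_conjTranspose_mul_self C).smul (by norm_num)

theorem hx_nnd_fintype {m : ℕ} {s : Set (Fin m → ℂ)} {L : (Fin m → ℂ) → (Fin m → ℂ) → ℂ}
    (hL : IsNNDOn s L) {ι : Type*} [Fintype ι] (x : ι → Fin m → ℂ) (hx : ∀ i, x i ∈ s) :
    (Matrix.of fun i j : ι => L (x i) (x j)).PosSemidef := by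
  have := (hL _ (fun k => x ((Fintype.equivFin ι).symm k)) (fun k => hx _)).submatrix (Fintype.equivFin ι)
  convert this using 1
  ext i j
  simp

theorem hx_psd_limit {ι : Type*} [Fintype ι] {α : Type*} {l : Filter α} [l.NeBot]
    {A : α → Matrix ι ι ℂ} {A₀ : Matrix ι ι ℂ} (hA : ∀ᶠ h in l, (A h).PosSemidef)
    (hlim : ∀ a b, Tendsto (fun h => A h a b) l (𝓝 (A₀ a b))) : A₀.PosSemidef := by
  rw [Matrix.posSemidef_iff_dotProduct_mulVec]
  constructor
  · ext a b
    rw [Matrix.conjTranspose_apply]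
    refine tendsto_nhds_unique ((hlim b a).star) ((hlim a b).congr' ?_)
    filter_upwards [hA] with h hh
    exact (hh.1.apply a b).symm
  · intro x
    have ht : Tendsto (fun h => star x ⬝ᵥ (A h).mulVec x) l (𝓝 (star x ⬝ᵥ A₀.mulVec x)) := by
      simp only [dotProduct, Matrix.mulVec]
      refine tendsto_finsetSum _ fun a _ => Tendsto.const_mul _ (tendsto_finsetSum _ fun b _ => ?_)
      exact (hlim a b).mul_const _
    refine ge_of_tendsto ht ?_
    filter_upwards [hA] with h hh
    exact hh.dotProduct_mulVec_nonneg x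

theorem hx_update {m : ℕ} {Ω : Set (Fin m → ℂ)} (hΩo : IsOpen Ω) {z : Fin m → ℂ} (hz : z ∈ Ω)
    (i : Fin m) : ∃ R > 0, ∀ s ∈ ball (0 : ℂ) R, Function.update z i (z i + s) ∈ Ω := by
  have hc : Continuous (fun s : ℂ => Function.update z i (z i + s)) :=
    continuous_const.update i (by fun_prop)
  have : (fun s : ℂ => Function.update z i (z i + s)) ⁻¹' Ω ∈ 𝓝 (0 : ℂ) :=
    (hΩo.preimage hc).mem_nhds (by simpa using hz)
  exact Metric.mem_nhds_iff.mp this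

theorem hx_entry {m : ℕ} {Ω : Set (Fin m → ℂ)} (hΩo : IsOpen Ω)
    {L : (Fin m → ℂ) → (Fin m → ℂ) → ℂ} (hs : Sesq Ω L) {z w : Fin m → ℂ} (hz : z ∈ Ω)
    (hw : w ∈ Ω) (i j : Fin m) :
    Tendsto (fun h : ℝ => (h : ℂ)⁻¹ * (h : ℂ)⁻¹ *
      (L z w * L (Function.update z i (z i + h)) (Function.update w j (w j + h)) -
        L z (Function.update w j (w j + h)) * L (Function.update z i (z i + h)) w)) (𝓝[≠] 0)
      (𝓝 (L z w * pD i (pDb j L) z w - pD i L z w * pDb j L z w)) := by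
  obtain ⟨R₁, hR₁, hz'⟩ := hx_update hΩo hz i
  obtain ⟨R₂, hR₂, hw'⟩ := hx_update hΩo hw j
  set R := min R₁ R₂ with hR
  have hR0 : 0 < R := lt_min hR₁ hR₂
  have hz1 : ∀ s ∈ ball (0 : ℂ) R, Function.update z i (z i + s) ∈ Ω := fun s h =>
    hz' s (ball_subset_ball (min_le_left _ _) h)
  have hw1 : ∀ s ∈ ball (0 : ℂ) R, Function.update w j (w j + s) ∈ Ω := fun s h =>
    hw' s (ball_subset_ball (min_le_right _ _) h)
  have hupd : ∀ (x : Fin m → ℂ) (k : Fin m), Differentiable ℂ (fun s : ℂ => Function.update x k (x k + s)) := by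
    intro x k
    rw [differentiable_pi]
    intro l
    by_cases hl : l = k
    · subst hl; simp only [Function.update_self]; fun_prop
    · simp only [Function.update_of_ne hl]; fun_prop
  set f : ℂ → ℂ → ℂ := fun s t =>
    L (Function.update z i (z i + s)) (Function.update w j (w j + (starRingEnd ℂ) t)) with hf
  have hconjmem : ∀ t ∈ ball (0 : ℂ) R, (starRingEnd ℂ) t ∈ ball (0 : ℂ) R := by
    intro t ht
    rw [mem_ball, dist_zero_right] at ht ⊢
    rwa [RCLike.norm_conj]
  have h1 : ∀ t ∈ ball (0 : ℂ) R, DifferentiableOn ℂ (fun s => f s t) (ball 0 R) := by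
    intro t ht
    exact ((hs.1 _ (hw1 _ (hconjmem t ht))).differentiableOn).comp (hupd z i).differentiableOn hz1
  have hin : ∀ x ∈ Ω, DifferentiableOn ℂ
      (fun t => (starRingEnd ℂ) (L x (Function.update w j (w j + t)))) (ball 0 R) := fun x hx =>
    (hs.2 _ hx).differentiableOn.comp (hupd w j).differentiableOn hw1
  have hder : ∀ x ∈ Ω, ∀ t ∈ ball (0 : ℂ) R, HasDerivAt
      (fun t => L x (Function.update w j (w j + (starRingEnd ℂ) t)))
      ((starRingEnd ℂ) (deriv (fun t => (starRingEnd ℂ) (L x (Function.update w j (w j + t))))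
        ((starRingEnd ℂ) t))) t := by
    intro x hx t ht
    have hd := ((hin x hx).differentiableAt (isOpen_ball.mem_nhds (hconjmem t ht))).hasDerivAt
    have := hd.conj_conj
    rw [Complex.conj_conj] at this
    refine this.congr_of_eventuallyEq (Filter.Eventually.of_forall fun t => ?_)
    simp
  have h2 : ∀ s ∈ ball (0 : ℂ) R, DifferentiableOn ℂ (f s) (ball 0 R) := fun s hs' t ht =>
    (hder _ (hz1 s hs') t ht).differentiableAt.differentiableWithinAt
  have hpDb : ∀ x ∈ Ω, HasDerivAt (fun t => L x (Function.update w j (w j + (starRingEnd ℂ) t)))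
      (pDb j L x w) 0 := by
    intro x hx
    have := hder x hx 0 (mem_ball_self hR0)
    convert this using 1
    rw [pDb, map_zero]
    congr 1
    rw [deriv_comp_const_add (f := fun t => (starRingEnd ℂ) (L x (Function.update w j t))), add_zero]
  have hpD : ∀ F : (Fin m → ℂ) → (Fin m → ℂ) → ℂ,
      deriv (fun s => F (Function.update z i (z i + s)) w) 0 = pD i F z w := by
    intro F
    rw [pD, deriv_comp_const_add (f := fun s => F (Function.update z i s) w), add_zero]
  have hf00 : f 0 0 = L z w := by simp [hf]
  have hD2 : deriv (fun s => deriv (f s) 0) 0 = pD i (pDb j L) z w := by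
    rw [← hpD]
    apply Filter.EventuallyEq.deriv_eq
    filter_upwards [ball_mem_nhds (0 : ℂ) hR0] with s hs'
    exact (hpDb _ (hz1 s hs')).deriv
  have hDt : HasDerivAt (f 0) (pDb j L z w) 0 := by
    have := hpDb z hz
    simpa [hf] using this
  have hDs : HasDerivAt (fun s => f s 0) (pD i L z w) 0 := by
    have := ((h1 0 (mem_ball_self hR0)).differentiableAt (ball_mem_nhds _ hR0)).hasDerivAt
    have e : deriv (fun s => f s 0) 0 = pD i L z w := by
      rw [← hpD]
      simp [hf]
    rwa [e] at this
  have hlim := hx_double_limit hR0 h1 h2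
  rw [hD2] at hlim
  have hlt := hDt.tendsto_slope_zero
  have hls := hDs.tendsto_slope_zero
  have hcomb := (hlim.const_mul (L z w)).sub (hls.mul hlt)
  have hreal : Tendsto (fun h : ℝ => (h : ℂ)) (𝓝[≠] 0) (𝓝[≠] 0) := by
    apply tendsto_nhdsWithin_iff.mpr
    constructor
    · have := Complex.continuous_ofReal.tendsto 0
      rw [Complex.ofReal_zero] at this
      exact this.mono_left nhdsWithin_le_nhds
    · filter_upwards [self_mem_nhdsWithin] with h hh
      simpa using hh
  refine (hcomb.comp hreal).congr ?_
  intro h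
  have g1 : f h h = L (Function.update z i (z i + h)) (Function.update w j (w j + h)) := by
    simp [hf]
  have g2 : f h 0 = L (Function.update z i (z i + h)) w := by simp [hf]
  have g3 : f 0 h = L z (Function.update w j (w j + h)) := by simp [hf]
  simp only [Function.comp_apply, zero_add, smul_eq_mul, g1, g2, g3, hf00]
  ring

theorem hx_main {m : ℕ} {Ω : Set (Fin m → ℂ)} (hΩo : IsOpen Ω)
    {L : (Fin m → ℂ) → (Fin m → ℂ) → ℂ} (hs : Sesq Ω L) (hL : IsNNDOn Ω L) :
    IsNNDOnM Ω (fun z w => Matrix.of fun i j : Fin m =>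
      L z w * pD i (pDb j L) z w - pD i L z w * pDb j L z w) := by
  intro p x hx
  apply hx_psd_limit (l := 𝓝[≠] (0 : ℝ)) (A := fun h => Matrix.of fun a b : Fin p × Fin m =>
    (h : ℂ)⁻¹ * (h : ℂ)⁻¹ * (L (x a.1) (x b.1) *
      L (Function.update (x a.1) a.2 (x a.1 a.2 + h)) (Function.update (x b.1) b.2 (x b.1 b.2 + h)) -
      L (x a.1) (Function.update (x b.1) b.2 (x b.1 b.2 + h)) *
        L (Function.update (x a.1) a.2 (x a.1 a.2 + h)) (x b.1)))
  · have hev : ∀ᶠ h : ℝ in 𝓝[≠] 0, ∀ a : Fin p × Fin m,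
        Function.update (x a.1) a.2 (x a.1 a.2 + h) ∈ Ω := by
      rw [eventually_all]
      intro a
      obtain ⟨R, hR, hm⟩ := hx_update hΩo (hx a.1) a.2
      filter_upwards [nhdsWithin_le_nhds (ball_mem_nhds (0 : ℝ) hR)] with h hh
      apply hm
      rw [mem_ball, dist_zero_right] at hh ⊢
      rwa [Complex.norm_real]
    filter_upwards [hev] with h hh
    have hP := hx_det (hx_nnd_fintype hL (ι := (Fin p × Fin m) ⊕ (Fin p × Fin m))
      (Sum.elim (fun a => x a.1) (fun a => Function.update (x a.1) a.2 (x a.1 a.2 + h)))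
      (by rintro (a | a)
          · exact hx a.1
          · exact hh a))
    have := hP.smul (show (0 : ℝ) ≤ h⁻¹ * h⁻¹ from mul_self_nonneg _)
    convert this using 1
    ext a b
    simp [Matrix.smul_apply]
  · intro a b
    exact hx_entry hΩo hs (hx a.1) (hx b.1) a.2 b.2

end HX

/-- If `K` is a non-negative definite sesqui-analytic kernel on a domain `Ω ⊆ ℂᵐ` whose
reproducing kernel Hilbert space contains the constant function `1`, with `c = ‖1‖²`
(equivalently, `c·K − 1` is a non-negative definite kernel), then
`(∂ᵢ∂̄ⱼK)ᵢⱼ ⪯ c·(K ∂ᵢ∂̄ⱼK − ∂ᵢK ∂̄ⱼK)ᵢⱼ = c·G_{K⁻¹}`. -/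
theorem stmt_12 (Ω : Set (Fin m → ℂ)) (hΩo : IsOpen Ω) (hΩc : IsConnected Ω)
    (K : (Fin m → ℂ) → (Fin m → ℂ) → ℂ) (hs : Sesq Ω K) (hK : IsNNDOn Ω K)
    (c : ℝ) (hc : 0 < c)
    (hone : IsNNDOn Ω (fun z w => (c : ℂ) * K z w - 1)) :
    IsNNDOnM Ω (fun z w =>
      Matrix.of fun i j : Fin m =>
        (c : ℂ) * (K z w * pD i (pDb j K) z w - pD i K z w * pDb j K z w) -
          pD i (pDb j K) z w) := by
  have hs' : Sesq Ω (fun z w => (c : ℂ) * K z w - 1) := by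
    refine ⟨fun w hw => ?_, fun z hz => ?_⟩
    · exact (analyticOnNhd_const.mul (hs.1 w hw)).sub analyticOnNhd_const
    · have : (fun w => (starRingEnd ℂ) ((c : ℂ) * K z w - 1)) =
          fun w => (c : ℂ) * (starRingEnd ℂ) (K z w) - 1 := by
        funext w; simp
      rw [this]
      exact (analyticOnNhd_const.mul (hs.2 z hz)).sub analyticOnNhd_const
  have hDb : ∀ j, pDb j (fun z w => (c : ℂ) * K z w - 1) = fun z w => (c : ℂ) * pDb j K z w := by
    intro j
    funext z w
    simp only [pDb, map_sub, map_mul, Complex.conj_ofReal, map_one]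
    rw [deriv_sub_const, deriv_const_mul_field, map_mul, Complex.conj_ofReal]
  have hD : ∀ i z w, pD i (fun z w => (c : ℂ) * K z w - 1) z w = (c : ℂ) * pD i K z w := by
    intro i z w
    simp only [pD]
    rw [deriv_sub_const, deriv_const_mul_field]
  have hDD : ∀ i j z w, pD i (fun z w => (c : ℂ) * pDb j K z w) z w = (c : ℂ) * pD i (pDb j K) z w := by
    intro i j z w
    simp only [pD]
    rw [deriv_const_mul_field]
  intro p x hx
  have := (hx_main hΩo hs' hone p x hx).smul (show (0 : ℝ) ≤ c⁻¹ by positivity)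
  convert this using 1
  ext a b
  have hc' : (c : ℂ) ≠ 0 := by exact_mod_cast hc.ne'
  simp only [Matrix.of_apply, Matrix.smul_apply, hDb, hD, hDD, Complex.real_smul, Complex.ofReal_inv]
  field_simp
  ring
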